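/- There is no 3×3 complex matrix x with x₁₁ = x₂₂ = x₂₃ = x₃₂ = x₃₃ = 0 such that xᴴ x equals the 3×3 identity matrix. (That is, the Hilbert B-module E, with inner product ⟨x,y⟩ = xᴴ y, admits no unit vector.) -/

import Mathlib

open Matrix

/-- There is no 3×3 complex matrix `x` of the block pattern
`(0 * *; * 0 0; * 0 0)` with `xᴴ x = 1`; i.e. the Hilbert module `E` admits no
unit vector. -/
theorem no_unit_vector :
    ¬ ∃ x : Matrix (Fin 3) (Fin 3) ℂ,
        x 0 0 = 0 ∧ x 1 1 = 0 ∧ x 1 2 = 0 ∧ x 2 1 = 0 ∧ x 2 2 = 0 ∧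
        xᴴ * x = (1 : Matrix (Fin 3) (Fin 3) ℂ) := by
  rintro ⟨x, h00, h11, h12, h21, h22, h⟩
  -- Columns 1 and 2 are both multiples of the first basis vector, so `x` is singular,
  -- whereas `xᴴ * x = 1` forces `det x ≠ 0`.
  have hdet : x.det = 0 := by
    simp [Matrix.det_fin_three, h00, h11, h12, h21, h22]
  have h1 := congrArg Matrix.det h
  simp [Matrix.det_mul, hdet] at h1
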